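/- The infinite series identity 5π/2 = Σ_{k=0}^{∞} (1/4)^k · [(1/4)_k (1/2)_k] / [(9/8)_k (13/8)_k] · (48k² + 68k + 23) / ((k + 1)(4k + 3)) holds, where the sum is over natural numbers k and all quantities are real numbers. -/

import Mathlib

noncomputable def risingFactorial (a : ℝ) (k : ℕ) : ℝ := ∏ i ∈ Finset.range k, (a + i)

open Filter Topology

lemma rf_zero (a : ℝ) : risingFactorial a 0 = 1 := by simp [risingFactorial]

lemma rf_succ (a : ℝ) (k : ℕ) : risingFactorial a (k+1) = risingFactorial a k * (a + k) := by
  simp [risingFactorial, Finset.prod_range_succ]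

lemma rf_pos {a : ℝ} (ha : 0 < a) (k : ℕ) : 0 < risingFactorial a k :=
  Finset.prod_pos fun i _ => by positivity

/-- Summation by a WZ pair. -/
lemma wz (F G : ℕ → ℕ → ℝ) (e : ℕ → ℝ) (h0 : ∀ n j, 0 ≤ F n j) (he : Tendsto e atTop (𝓝 0))
    (hle : ∀ n j, F n j ≤ e n * F 0 j) (hs : Summable (F 0))
    (hG : ∀ n, Tendsto (G n) atTop (𝓝 0))
    (hrec : ∀ n j, F n j - F (n+1) j = G n j - G n (j+1)) :
    Tendsto (fun N => ∑ n ∈ Finset.range N, G n 0) atTop (𝓝 (∑' j, F 0 j)) := by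
  have hsn : ∀ n, Summable (F n) := fun n =>
    Summable.of_nonneg_of_le (h0 n) (hle n) (hs.mul_left _)
  have hstep : ∀ n, G n 0 = (∑' j, F n j) - ∑' j, F (n+1) j := by
    intro n
    have h1 := ((hsn n).hasSum.sub (hsn (n+1)).hasSum).tendsto_sum_nat
    have h2 : Tendsto (fun N => ∑ j ∈ Finset.range N, (F n j - F (n+1) j)) atTop
        (𝓝 (G n 0 - 0)) := by
      have : (fun N => ∑ j ∈ Finset.range N, (F n j - F (n+1) j)) = fun N => G n 0 - G n N := by
        funext N
        simp only [hrec]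
        exact Finset.sum_range_sub' _ _
      rw [this]
      exact tendsto_const_nhds.sub (hG n)
    have := tendsto_nhds_unique h1 h2
    linarith
  have hS : Tendsto (fun n => ∑' j, F n j) atTop (𝓝 0) := by
    have hb : Tendsto (fun n => e n * ∑' j, F 0 j) atTop (𝓝 0) := by
      simpa using he.mul_const (∑' j, F 0 j)
    refine squeeze_zero (fun n => tsum_nonneg (h0 n)) (fun n => ?_) hb
    rw [← tsum_mul_left]
    exact (hsn n).tsum_le_tsum (hle n) (hs.mul_left _)
  have : (fun N => ∑ n ∈ Finset.range N, G n 0) =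
      fun N => (∑' j, F 0 j) - ∑' j, F N j := by
    funext N
    simp only [hstep]
    exact Finset.sum_range_sub' (fun n => ∑' j, F n j) _
  rw [this]
  simpa using tendsto_const_nhds.sub hS

noncomputable def w (j : ℕ) : ℝ := risingFactorial (3/2) j / risingFactorial (7/4) j

lemma w_pos (j : ℕ) : 0 < w j := div_pos (rf_pos (by norm_num) _) (rf_pos (by norm_num) _)

lemma w_succ (j : ℕ) : w (j+1) = w j * ((3/2 + j) / (7/4 + j)) := by
  have := (rf_pos (show (0:ℝ) < 7/4 by norm_num) j).ne'
  have h2 : (7/4 + (j:ℝ)) ≠ 0 := by positivity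
  simp only [w, rf_succ]
  field_simp

lemma w_bound (j : ℕ) : w j ^ 5 * (j + 1) ≤ 1 := by
  induction j with
  | zero => simp [w, rf_zero]
  | succ j ih =>
    refine le_trans ?_ ih
    rw [w_succ, mul_pow, mul_assoc]
    refine mul_le_mul_of_nonneg_left ?_ (pow_nonneg (w_pos j).le _)
    rw [div_pow, div_mul_eq_mul_div, div_le_iff₀ (by positivity)]
    push_cast
    have hj : (0:ℝ) ≤ j := by positivity
    rw [← sub_nonneg]
    ring_nf
    positivity

lemma w_tendsto : Tendsto w atTop (𝓝 0) := by
  have h5 : Tendsto (fun j => w j ^ 5) atTop (𝓝 0) := by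
    refine squeeze_zero (fun j => pow_nonneg (w_pos j).le _) (fun j => ?_)
      tendsto_one_div_add_atTop_nhds_zero_nat
    rw [le_div_iff₀ (by positivity)]
    exact w_bound j
  have := h5.rpow_const (p := 1/5) (Or.inr (by norm_num))
  have h0 : (0:ℝ) ^ (1/5 : ℝ) = 0 := Real.zero_rpow (by norm_num)
  rw [h0] at this
  refine this.congr fun j => ?_
  rw [← Real.rpow_natCast, ← Real.rpow_mul (w_pos j).le]
  norm_num

lemma w_summable : Summable fun j : ℕ => w j / (j + 1) := by
  refine summable_of_sum_range_le (c := 8) (fun j => div_nonneg (w_pos j).le (by positivity)) ?_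
  intro N
  have h : ∀ j : ℕ, w j / (j+1) ≤ 8 * w j - 8 * w (j+1) := by
    intro j
    have e : 8 * w j - 8 * w (j+1) = w j * (2 / (7/4 + j)) := by
      rw [w_succ]
      have h2 : (7/4 + (j:ℝ)) ≠ 0 := by positivity
      field_simp
      ring
    rw [e, div_eq_mul_one_div]
    refine mul_le_mul_of_nonneg_left ?_ (w_pos j).le
    rw [div_le_div_iff₀ (by positivity) (by positivity)]
    have hj : (0:ℝ) ≤ j := by positivity
    linarith
  calc _ ≤ ∑ j ∈ Finset.range N, (8 * w j - 8 * w (j+1)) := Finset.sum_le_sum fun j _ => h j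
    _ = 8 * w 0 - 8 * w N := Finset.sum_range_sub' (fun j => 8 * w j) N
    _ ≤ 8 := by
      have := w_pos N
      have h0 : w 0 = 1 := by simp [w, rf_zero]
      rw [h0]; linarith

noncomputable def F2 (n j : ℕ) : ℝ :=
  risingFactorial (3/4) n * risingFactorial (3/2) j / ((j+1) * risingFactorial (7/4) (n+j))

noncomputable def G2 (n j : ℕ) : ℝ := F2 n j * ((j+1) / (n + 1/4))

lemma F2_pos (n j : ℕ) : 0 < F2 n j := by
  have := rf_pos (show (0:ℝ) < 7/4 by norm_num) (n+j)
  have := rf_pos (show (0:ℝ) < 3/4 by norm_num) n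
  have := rf_pos (show (0:ℝ) < 3/2 by norm_num) j
  unfold F2
  positivity

lemma F2_zero (j : ℕ) : F2 0 j = w j / (j+1) := by
  have := (rf_pos (show (0:ℝ) < 7/4 by norm_num) j).ne'
  simp only [F2, w, rf_zero, zero_add]
  field_simp

lemma F2_n (n j : ℕ) : F2 (n+1) j = F2 n j * ((3/4 + n) / (7/4 + (n + j))) := by
  have := (rf_pos (show (0:ℝ) < 7/4 by norm_num) (n+j)).ne'
  have h2 : (7/4 + ((n:ℝ) + j)) ≠ 0 := by positivity
  simp only [F2, show n + 1 + j = (n+j)+1 by ring, rf_succ]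
  push_cast
  field_simp

lemma F2_j (n j : ℕ) : F2 n (j+1) = F2 n j * ((3/2 + j) * (j+1) / ((j+2) * (7/4 + (n + j)))) := by
  have := (rf_pos (show (0:ℝ) < 7/4 by norm_num) (n+j)).ne'
  have h2 : (7/4 + ((n:ℝ) + j)) ≠ 0 := by positivity
  simp only [F2, show n + (j + 1) = (n+j)+1 by ring, rf_succ]
  push_cast
  rw [show (j:ℝ)+1+1 = j+2 by ring]
  field_simp

lemma F2_le (n j : ℕ) : F2 n j ≤ (3/4) / (n + 3/4) * F2 0 j := by
  induction n with
  | zero => norm_num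
  | succ n ih =>
    rw [F2_n]
    calc _ ≤ (3/4) / (n + 3/4) * F2 0 j * ((3/4 + n) / (7/4 + n)) := by
          have := F2_pos 0 j
          gcongr
          linarith [show (0:ℝ) ≤ j by positivity]
      _ = _ := by
          push_cast
          have h2 : ((n:ℝ) + 3/4) ≠ 0 := by positivity
          have h3 : ((n:ℝ) + 1 + 3/4) ≠ 0 := by positivity
          rw [show (3/4 + (n:ℝ)) = n + 3/4 by ring, show (7/4 + (n:ℝ)) = n + 1 + 3/4 by ring]
          field_simp

lemma eps_tendsto : Tendsto (fun n : ℕ => (3/4 : ℝ) / (n + 3/4)) atTop (𝓝 0) :=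
  tendsto_const_nhds.div_atTop
    (tendsto_atTop_add_const_right _ _ tendsto_natCast_atTop_atTop)

lemma F2_summable : Summable (F2 0) := by
  simpa only [← F2_zero] using w_summable

lemma F2_tend : Tendsto (fun j : ℕ => F2 0 j * (j+1)) atTop (𝓝 0) := by
  refine w_tendsto.congr fun j => ?_
  rw [F2_zero]
  have : (j:ℝ)+1 ≠ 0 := by positivity
  field_simp

lemma G2_sum (N : ℕ) : ∑ n ∈ Finset.range N, G2 n 0 =
    6 * ∑ i ∈ Finset.range (2*N), (-1:ℝ)^i / (2*i+1) := by
  induction N with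
  | zero => simp
  | succ N ih =>
    have hg : G2 N 0 = (3/4) / ((N + 3/4) * (N+1/4)) := by
      have h : ∀ n : ℕ, F2 n 0 = (3/4)/(n+3/4) := by
        intro n
        induction n with
        | zero => simp [F2, rf_zero]
        | succ n ih =>
          rw [F2_n, ih]
          push_cast
          have h2 : ((n:ℝ) + 3/4) ≠ 0 := by positivity
          have h3 : ((n:ℝ) + 1 + 3/4) ≠ 0 := by positivity
          rw [show (3/4 + (n:ℝ)) = n + 3/4 by ring,
            show (7/4 + ((n:ℝ)+0)) = n + 1 + 3/4 by ring]
          field_simp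
      rw [G2, h]
      have h2 : ((N:ℝ) + 3/4) ≠ 0 := by positivity
      have h3 : ((N:ℝ) + 1/4) ≠ 0 := by positivity
      push_cast
      field_simp
      ring
    rw [Finset.sum_range_succ, ih, show 2*(N+1) = 2*N+1+1 by ring, Finset.sum_range_succ,
      Finset.sum_range_succ, hg]
    have e1 : (-1:ℝ)^(2*N) = 1 := by simp [pow_mul]
    rw [pow_succ, e1]
    push_cast
    have h2 : ((N:ℝ) + 3/4) ≠ 0 := by positivity
    have h3 : ((N:ℝ) + 1/4) ≠ 0 := by positivity
    have h4 : (2*(2*(N:ℝ)) + 1) ≠ 0 := by positivity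
    have h5 : (2*(2*(N:ℝ)+1) + 1) ≠ 0 := by positivity
    have : (3/4:ℝ) / ((N + 3/4) * (N+1/4)) =
        6 * (1 / (2*(2*(N:ℝ)) + 1) + 1 * -1 / (2*(2*(N:ℝ)+1) + 1)) := by
      rw [show (2*(2*(N:ℝ)) + 1) = 4 * (N+1/4) by ring,
        show (2*(2*(N:ℝ)+1) + 1) = 4 * (N+3/4) by ring]
      field_simp
      ring
    rw [this]
    ring

lemma F2_tsum : ∑' j, F2 0 j = 3 / 2 * Real.pi := by
  have h := wz F2 G2 _ (fun n j => (F2_pos n j).le) eps_tendsto F2_le F2_summable ?_ ?_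
  · have h1 : Tendsto (fun N => ∑ n ∈ Finset.range N, G2 n 0) atTop (𝓝 (6 * (Real.pi/4))) := by
      simp only [G2_sum]
      refine Tendsto.const_mul _ ?_
      exact Real.tendsto_sum_pi_div_four.comp
        (tendsto_id.const_mul_atTop' (by norm_num : 0 < 2))
    rw [tendsto_nhds_unique h h1]
    ring
  · intro n
    have hb := (F2_tend.const_mul ((3/4) / ((n:ℝ) + 3/4))).mul_const (1 / ((n:ℝ)+1/4))
    rw [mul_zero, zero_mul] at hb
    refine squeeze_zero (fun j => mul_nonneg (F2_pos n j).le (by positivity)) (fun j => ?_) hb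
    calc G2 n j ≤ ((3/4) / (n + 3/4) * F2 0 j) * ((j+1) / (n + 1/4)) :=
          mul_le_mul_of_nonneg_right (F2_le n j) (by positivity)
      _ = _ := by ring
  · intro n j
    simp only [G2, F2_n, F2_j]
    push_cast
    have h2 : (7/4 + ((n:ℝ) + j)) ≠ 0 := by positivity
    have h3 : ((n:ℝ) + 1/4) ≠ 0 := by positivity
    rw [show (j:ℝ)+1+1 = j+2 by ring]
    field_simp
    ring

noncomputable def F1 (n j : ℕ) : ℝ :=
  risingFactorial (1/4) n * risingFactorial (1/2) n * risingFactorial (3/4) n *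
    risingFactorial 1 n / risingFactorial (1/4) (2*n) *
    (risingFactorial (3/2) j * risingFactorial 1 j /
      (risingFactorial (7/4) (n+j) * risingFactorial 2 (n+j)))

noncomputable def P (n j : ℕ) : ℝ :=
  j / (2*n+1/4) + (48*(n:ℝ)^2+68*n+23) / (16 * ((2*n+1/4)*(2*n+5/4)))

noncomputable def G1 (n j : ℕ) : ℝ := F1 n j * P n j

lemma F1_pos (n j : ℕ) : 0 < F1 n j := by
  have h1 := fun k => rf_pos (show (0:ℝ) < 7/4 by norm_num) k
  have h2 := fun k => rf_pos (show (0:ℝ) < 3/4 by norm_num) k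
  have h3 := fun k => rf_pos (show (0:ℝ) < 3/2 by norm_num) k
  have h4 := fun k => rf_pos (show (0:ℝ) < 1/4 by norm_num) k
  have h5 := fun k => rf_pos (show (0:ℝ) < 1/2 by norm_num) k
  have h6 := fun k => rf_pos (show (0:ℝ) < 1 by norm_num) k
  have h7 := fun k => rf_pos (show (0:ℝ) < 2 by norm_num) k
  unfold F1
  have := h1 (n+j); have := h2 n; have := h3 j; have := h4 n; have := h4 (2*n)
  have := h5 n; have := h6 n; have := h6 j; have := h7 (n+j)
  positivity

lemma P_pos (n j : ℕ) : 0 < P n j := by unfold P; positivity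

lemma rf_two (n : ℕ) : risingFactorial 2 n = risingFactorial 1 n * (n+1) := by
  induction n with
  | zero => simp [rf_zero]
  | succ n ih => simp only [rf_succ, ih]; push_cast; ring

lemma rf_seven (n : ℕ) : risingFactorial (7/4) n = risingFactorial (3/4) n * (n+3/4) * (4/3) := by
  induction n with
  | zero => norm_num [rf_zero]
  | succ n ih => simp only [rf_succ, ih]; push_cast; ring

lemma rf_double (n : ℕ) : risingFactorial (1/4) (2*n) * ((2*n+1/4)*(2*n+5/4)) =
    5/16 * 4^n * (risingFactorial (9/8) n * risingFactorial (13/8) n) := by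
  induction n with
  | zero => norm_num [rf_zero]
  | succ n ih =>
    rw [show 2*(n+1) = 2*n+1+1 by ring]
    simp only [rf_succ, pow_succ]
    push_cast
    linear_combination (((2*n+2)+1/4)*((2*n+2)+5/4)) * ih

lemma F1_zero (j : ℕ) : F1 0 j = F2 0 j := by
  have := (rf_pos (show (0:ℝ) < 7/4 by norm_num) j).ne'
  have := (rf_pos (show (0:ℝ) < 1 by norm_num) j).ne'
  simp only [F1, F2, mul_zero, rf_zero, zero_add, rf_two]
  field_simp

lemma F1_n (n j : ℕ) : F1 (n+1) j = F1 n j *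
    ((1/4+n)*(1/2+n)*(3/4+n)*(1+n) /
      ((1/4+2*n)*(5/4+2*n)*(7/4+(n+j))*(2+(n+j)))) := by
  have := (rf_pos (show (0:ℝ) < 7/4 by norm_num) (n+j)).ne'
  have := (rf_pos (show (0:ℝ) < 2 by norm_num) (n+j)).ne'
  have := (rf_pos (show (0:ℝ) < 1/4 by norm_num) (2*n)).ne'
  have h2 : (7/4 + ((n:ℝ) + j)) ≠ 0 := by positivity
  have h3 : (2 + ((n:ℝ) + j)) ≠ 0 := by positivity
  have h4 : (1/4 + 2*(n:ℝ)) ≠ 0 := by positivity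
  have h5 : (5/4 + 2*(n:ℝ)) ≠ 0 := by positivity
  simp only [F1, show n + 1 + j = (n+j)+1 by ring, show 2*(n+1) = 2*n+1+1 by ring, rf_succ]
  push_cast
  rw [show (1/4 + (2*(n:ℝ)+1)) = 5/4 + 2*n by ring]
  field_simp

lemma F1_j (n j : ℕ) : F1 n (j+1) = F1 n j *
    ((3/2+j)*(1+j) / ((7/4+(n+j))*(2+(n+j)))) := by
  have := (rf_pos (show (0:ℝ) < 7/4 by norm_num) (n+j)).ne'
  have := (rf_pos (show (0:ℝ) < 2 by norm_num) (n+j)).ne'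
  have h2 : (7/4 + ((n:ℝ) + j)) ≠ 0 := by positivity
  have h3 : (2 + ((n:ℝ) + j)) ≠ 0 := by positivity
  simp only [F1, show n + (j + 1) = (n+j)+1 by ring, rf_succ]
  push_cast
  field_simp

lemma F1_le (n j : ℕ) : F1 n j ≤ (1/2)^n * F1 0 j := by
  induction n with
  | zero => simp
  | succ n ih =>
    rw [F1_n]
    have hr : (1/4+(n:ℝ))*(1/2+n)*(3/4+n)*(1+n) /
      ((1/4+2*n)*(5/4+2*n)*(7/4+(n+j))*(2+(n+j))) ≤ 1/2 := by
      rw [div_le_iff₀ (by positivity)]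
      have hn : (0:ℝ) ≤ n := by positivity
      have hj : (0:ℝ) ≤ j := by positivity
      rw [← sub_nonneg]
      ring_nf
      positivity
    calc _ ≤ F1 n j * (1/2) := mul_le_mul_of_nonneg_left hr (F1_pos n j).le
      _ ≤ (1/2)^n * F1 0 j * (1/2) := by linarith
      _ = _ := by ring

lemma G1_tendsto : Tendsto (fun N => ∑ n ∈ Finset.range N, G1 n 0) atTop
    (𝓝 (3 / 2 * Real.pi)) := by
  have e : F1 0 = F2 0 := funext F1_zero
  have h := wz F1 G1 _ (fun n j => (F1_pos n j).le)
    (tendsto_pow_atTop_nhds_zero_of_lt_one (by norm_num) (by norm_num)) F1_le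
    (e ▸ F2_summable) ?_ ?_
  · rwa [e, F2_tsum] at h
  · intro n
    have hb := (F2_tend.const_mul ((1/2)^n)).mul_const (1 / (2*(n:ℝ)+1/4) + P n 0)
    rw [mul_zero, zero_mul] at hb
    refine squeeze_zero (fun j => mul_nonneg (F1_pos n j).le (P_pos n j).le) (fun j => ?_) hb
    have hP : P n j ≤ (j+1) * (1 / (2*(n:ℝ)+1/4) + P n 0) := by
      have e : P n j = j * (1 / (2*(n:ℝ)+1/4)) + P n 0 := by
        simp only [P]; push_cast; ring
      have := P_pos n 0
      have h1 : 0 < 1 / (2*(n:ℝ)+1/4) := by positivity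
      have hj : (0:ℝ) ≤ j := by positivity
      rw [e]
      nlinarith [mul_nonneg hj this.le]
    calc G1 n j ≤ ((1/2)^n * F1 0 j) * ((j+1) * (1 / (2*(n:ℝ)+1/4) + P n 0)) :=
          mul_le_mul (F1_le n j) hP (P_pos n j).le
            (mul_nonneg (by positivity) (F1_pos 0 j).le)
      _ = _ := by rw [e]; ring
  · intro n j
    simp only [G1, F1_n, F1_j, P]
    push_cast
    have h2 : (7/4 + ((n:ℝ) + j)) ≠ 0 := by positivity
    have h3 : (2 + ((n:ℝ) + j)) ≠ 0 := by positivity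
    have h4 : (1/4 + 2*(n:ℝ)) ≠ 0 := by positivity
    have h5 : (5/4 + 2*(n:ℝ)) ≠ 0 := by positivity
    rw [show 2*(n:ℝ)+1/4 = 1/4+2*n by ring, show 2*(n:ℝ)+5/4 = 5/4+2*n by ring]
    field_simp
    ring

lemma term_eq (k : ℕ) : (1/4 : ℝ) ^ k * (risingFactorial (1/4) k * risingFactorial (1/2) k) /
        (risingFactorial (9/8) k * risingFactorial (13/8) k) * ((48 * (k:ℝ)^2 + 68 * (k:ℝ) + 23) / (((k:ℝ) + 1) * (4 * (k:ℝ) + 3))) = 5/3 * G1 k 0 := by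
  have p1 := (rf_pos (show (0:ℝ) < 3/4 by norm_num) k).ne'
  have p2 := (rf_pos (show (0:ℝ) < 1 by norm_num) k).ne'
  have p3 := (rf_pos (show (0:ℝ) < 9/8 by norm_num) k).ne'
  have p4 := (rf_pos (show (0:ℝ) < 13/8 by norm_num) k).ne'
  have p5 := (rf_pos (show (0:ℝ) < 1/4 by norm_num) (2*k)).ne'
  have h4 : (2*(k:ℝ)+1/4) ≠ 0 := by positivity
  have h5 : (2*(k:ℝ)+5/4) ≠ 0 := by positivity
  have hd : risingFactorial (1/4) (2*k) = 5/16 * 4^k *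
      (risingFactorial (9/8) k * risingFactorial (13/8) k) / ((2*k+1/4)*(2*k+5/4)) := by
    rw [← rf_double]; field_simp
  simp only [G1, F1, P, add_zero, rf_zero, rf_two, rf_seven, one_div, inv_pow]
  simp only [← one_div]
  push_cast
  rw [show 4*(k:ℝ)+3 = 4*(k+3/4) by ring]
  have h6 : ((k:ℝ)+3/4) ≠ 0 := by positivity
  generalize 2*(k:ℝ)+1/4 = x at *
  generalize 2*(k:ℝ)+5/4 = y at *
  generalize (k:ℝ)+3/4 = z at *
  rw [hd]
  field_simp
  ring

theorem stmt_12 :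
    5 * Real.pi / 2 =
      ∑' k : ℕ, (1/4 : ℝ) ^ k * (risingFactorial (1/4) k * risingFactorial (1/2) k) /
        (risingFactorial (9/8) k * risingFactorial (13/8) k) * ((48 * (k:ℝ)^2 + 68 * (k:ℝ) + 23) / (((k:ℝ) + 1) * (4 * (k:ℝ) + 3))) := by
  simp only [term_eq]
  have h : HasSum (fun k => G1 k 0) (3 / 2 * Real.pi) :=
    (hasSum_iff_tendsto_nat_of_nonneg
      (fun n => mul_nonneg (F1_pos n 0).le (P_pos n 0).le) _).2 G1_tendsto
  rw [(h.mul_left (5/3)).tsum_eq]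
  ring
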